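/- The subalgebra 𝒜 of W coincides with the set of elements a = Σ_i w^i f_i of W such that each f_i has only simple poles, located only possibly at ±q^j (j ∈ ℤ), and the residues f_i^{(j,±)} satisfy: (1) f_{−i}(v⁻¹) = (−1)^i f_i(v); (2) f_i^{(i,±)} = 0; (3) for every positive integer k, f_{i+k}^{(i,±)} = (−1)^{k+1} f_{i−k}^{(i,±)} (same sign ± on both sides). In particular f_0^{(0,±)} = 0, so f_0 has no poles on the unit circle. -/

import Mathlib

noncomputable section

open Polynomial

/-- The punctured domain `ℂ^× ∖ (q^ℤ ∪ −q^ℤ)`, on which the localized q-Weyl algebra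
`W` acts faithfully by q-difference operators. -/
def Dom (q : ℝ) : Type := {z : ℂ // z ≠ 0 ∧ ∀ j : ℤ, z ≠ (q : ℂ) ^ j ∧ z ≠ -(q : ℂ) ^ j}

/-- The operator of multiplication by a rational function of `v`. -/
def mulOp (q : ℝ) (f : RatFunc ℂ) : Module.End ℂ (Dom q → ℂ) where
  toFun g := fun z => f.eval (RingHom.id ℂ) z.1 * g z
  map_add' g h := by funext z; exact mul_add _ (g z) (h z)
  map_smul' c g := by funext z; dsimp; ring

/-- The point `q^k z` of the domain. -/
def shiftMem {q : ℝ} (hq : 0 < q) (k : ℤ) (z : Dom q) : Dom q :=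
  ⟨(q : ℂ) ^ k * z.1, by
    have hq0 : (q : ℂ) ≠ 0 := by exact_mod_cast hq.ne'
    obtain ⟨h0, hz⟩ := z.2
    refine ⟨mul_ne_zero (zpow_ne_zero _ hq0) h0, fun j => ⟨?_, ?_⟩⟩
    · intro hEq
      refine (hz (j - k)).1 ?_
      rw [zpow_sub₀ hq0, eq_div_iff (zpow_ne_zero _ hq0), mul_comm]
      exact hEq
    · intro hEq
      refine (hz (j - k)).2 ?_
      rw [zpow_sub₀ hq0, ← neg_div, eq_div_iff (zpow_ne_zero _ hq0), mul_comm]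
      exact hEq⟩

/-- The operator `w^k`: `(w^k g)(z) = g(q^k z)`. -/
def shiftOp {q : ℝ} (hq : 0 < q) (k : ℤ) : Module.End ℂ (Dom q → ℂ) where
  toFun g := fun z => g (shiftMem hq k z)
  map_add' g h := rfl
  map_smul' c g := rfl

/-- `u₊ = w (v − v⁻¹)⁻¹`. -/
def uPlus {q : ℝ} (hq : 0 < q) : Module.End ℂ (Dom q → ℂ) :=
  shiftOp hq 1 * mulOp q (RatFunc.X - RatFunc.X⁻¹)⁻¹

/-- `u₋ = w⁻¹ (v − v⁻¹)⁻¹`. -/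
def uMinus {q : ℝ} (hq : 0 < q) : Module.End ℂ (Dom q → ℂ) :=
  shiftOp hq (-1) * mulOp q (RatFunc.X - RatFunc.X⁻¹)⁻¹

/-- `H_a = q^{a/2}(v^a u₊ + v^{−a} u₋)`. -/
def Hgen {q : ℝ} (hq : 0 < q) (a : ℤ) : Module.End ℂ (Dom q → ℂ) :=
  ((Real.sqrt q : ℂ)) ^ a •
    (mulOp q (RatFunc.X ^ a) * uPlus hq + mulOp q (RatFunc.X ^ (-a)) * uMinus hq)

/-- The algebra `𝒜 ⊂ W` generated by `v^k + v^{−k}` and `v^k u₊ + v^{−k} u₋`, `k ∈ ℤ`. -/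
def Acal {q : ℝ} (hq : 0 < q) : Subalgebra ℂ (Module.End ℂ (Dom q → ℂ)) :=
  Algebra.adjoin ℂ
    ((Set.range fun k : ℤ => mulOp q (RatFunc.X ^ k + RatFunc.X ^ (-k))) ∪
     (Set.range fun k : ℤ =>
       mulOp q (RatFunc.X ^ k) * uPlus hq + mulOp q (RatFunc.X ^ (-k)) * uMinus hq))

/-- The element `Σ_i w^i f_i` of `W`. -/
def wform {q : ℝ} (hq : 0 < q) (F : ℤ →₀ RatFunc ℂ) : Module.End ℂ (Dom q → ℂ) :=
  F.sum fun i f => shiftOp hq i * mulOp q f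

/-- The set of all elements of the form `Σ_i w^i f_i` (the crossed product containing `W`). -/
def WSet {q : ℝ} (hq : 0 < q) : Set (Module.End ℂ (Dom q → ℂ)) := Set.range (wform hq)

/-- The residue of a rational function with at most a simple pole at `z₀`
(arbitrary at non-poles, `0` when `z₀` is not a pole). -/
def residueAt (f : RatFunc ℂ) (z₀ : ℂ) : ℂ :=
  if f.denom.eval z₀ = 0 then f.num.eval z₀ / (Polynomial.derivative f.denom).eval z₀ else 0

/-- `f` has only simple poles, located only possibly at `±q^j`, `j ∈ ℤ`
(poles at `0` and `∞` are unrestricted: `f` is a rational function of `v, v⁻¹`). -/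
def OkPoles (q : ℝ) (f : RatFunc ℂ) : Prop :=
  ∀ z₀ : ℂ, z₀ ≠ 0 → f.denom.eval z₀ = 0 →
    f.denom.rootMultiplicity z₀ = 1 ∧ ∃ j : ℤ, z₀ = (q : ℂ) ^ j ∨ z₀ = -(q : ℂ) ^ j

/-! ### Values and residues of rational functions -/

/-- `f` is regular at `z` with value `c`. -/
def HasVal (f : RatFunc ℂ) (z c : ℂ) : Prop :=
  ∃ p d : ℂ[X], d.eval z ≠ 0 ∧
    algebraMap ℂ[X] (RatFunc ℂ) d * f = algebraMap ℂ[X] (RatFunc ℂ) p ∧ p.eval z = c * d.eval z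

/-- `f` has at most a simple pole at `z`, with residue `r`. -/
def HasRes (f : RatFunc ℂ) (z r : ℂ) : Prop :=
  HasVal ((RatFunc.X - RatFunc.C z) * f) z r

/-- `f` is regular at `z`. -/
def Reg (f : RatFunc ℂ) (z : ℂ) : Prop := ∃ c, HasVal f z c

theorem HasVal.add {f g : RatFunc ℂ} {z a b : ℂ} (hf : HasVal f z a) (hg : HasVal g z b) :
    HasVal (f + g) z (a + b) := by
  obtain ⟨p, d, h1, h2, h3⟩ := hf
  obtain ⟨p', d', h1', h2', h3'⟩ := hg
  refine ⟨p * d' + p' * d, d * d', by simp [h1, h1'], ?_, ?_⟩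
  · simp only [map_mul, map_add, ← h2, ← h2']; ring
  · simp only [eval_mul, eval_add, h3, h3']; ring

theorem HasVal.mul {f g : RatFunc ℂ} {z a b : ℂ} (hf : HasVal f z a) (hg : HasVal g z b) :
    HasVal (f * g) z (a * b) := by
  obtain ⟨p, d, h1, h2, h3⟩ := hf
  obtain ⟨p', d', h1', h2', h3'⟩ := hg
  refine ⟨p * p', d * d', by simp [h1, h1'], ?_, ?_⟩
  · simp only [map_mul, ← h2, ← h2']; ring
  · simp only [eval_mul, h3, h3']; ring

theorem HasVal.poly (p : ℂ[X]) (z : ℂ) :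
    HasVal (algebraMap ℂ[X] (RatFunc ℂ) p) z (p.eval z) :=
  ⟨p, 1, by simp, by simp, by simp⟩

theorem HasVal.C (c z : ℂ) : HasVal (RatFunc.C c) z c := by
  simpa using HasVal.poly (Polynomial.C c) z

theorem HasVal.X (z : ℂ) : HasVal RatFunc.X z z := by
  simpa using HasVal.poly (Polynomial.X) z

theorem HasVal.one (z : ℂ) : HasVal 1 z 1 := by
  simpa using HasVal.poly 1 z

theorem HasVal.zero (z : ℂ) : HasVal 0 z 0 := by
  simpa using HasVal.poly 0 z

theorem HasVal.inv {f : RatFunc ℂ} {z a : ℂ} (hf : HasVal f z a) (ha : a ≠ 0) :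
    HasVal f⁻¹ z a⁻¹ := by
  obtain ⟨p, d, h1, h2, h3⟩ := hf
  have hp : p.eval z ≠ 0 := by rw [h3]; exact mul_ne_zero ha h1
  have hp0 : algebraMap ℂ[X] (RatFunc ℂ) p ≠ 0 := by
    apply RatFunc.algebraMap_ne_zero
    rintro rfl; simp at hp
  have hf0 : f ≠ 0 := by rintro rfl; simp at h2; exact hp0 (by simp [← h2])
  refine ⟨d, p, hp, ?_, ?_⟩
  · rw [← h2]; field_simp
  · rw [h3]; field_simp

theorem HasVal.neg {f : RatFunc ℂ} {z a : ℂ} (hf : HasVal f z a) : HasVal (-f) z (-a) := by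
  have := (HasVal.C (-1) z).mul hf
  simpa using this

theorem HasVal.sub {f g : RatFunc ℂ} {z a b : ℂ} (hf : HasVal f z a) (hg : HasVal g z b) :
    HasVal (f - g) z (a - b) := by
  rw [sub_eq_add_neg, sub_eq_add_neg]; exact hf.add hg.neg

theorem HasVal.pow {f : RatFunc ℂ} {z a : ℂ} (hf : HasVal f z a) (n : ℕ) :
    HasVal (f ^ n) z (a ^ n) := by
  induction n with
  | zero => simpa using HasVal.one z
  | succ n ih => rw [pow_succ, pow_succ]; exact ih.mul hf

theorem HasVal.zpow {f : RatFunc ℂ} {z a : ℂ} (hf : HasVal f z a) (ha : a ≠ 0) (n : ℤ) :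
    HasVal (f ^ n) z (a ^ n) := by
  cases n with
  | ofNat n => simpa using hf.pow n
  | negSucc n =>
    rw [zpow_negSucc, zpow_negSucc]; exact (hf.pow _).inv (pow_ne_zero _ ha)

theorem HasVal.unique {f : RatFunc ℂ} {z a b : ℂ} (hf : HasVal f z a) (hg : HasVal f z b) :
    a = b := by
  obtain ⟨p, d, h1, h2, h3⟩ := hf
  obtain ⟨p', d', h1', h2', h3'⟩ := hg
  have : p * d' = p' * d := by
    apply RatFunc.algebraMap_injective ℂ
    rw [map_mul, map_mul, ← h2, ← h2']; ring
  have h := congrArg (Polynomial.eval z) this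
  rw [eval_mul, eval_mul, h3, h3'] at h
  have : a * (d.eval z * d'.eval z) = b * (d.eval z * d'.eval z) := by linear_combination h
  exact mul_right_cancel₀ (mul_ne_zero h1 h1') this

theorem HasVal.congr {f g : RatFunc ℂ} {z a b : ℂ} (hf : HasVal f z a) (h : f = g) (h' : a = b) :
    HasVal g z b := h ▸ h' ▸ hf

theorem HasRes.congr {f g : RatFunc ℂ} {z a b : ℂ} (hf : HasRes f z a) (h : f = g) (h' : a = b) :
    HasRes g z b := h ▸ h' ▸ hf

theorem HasRes.add {f g : RatFunc ℂ} {z a b : ℂ} (hf : HasRes f z a) (hg : HasRes g z b) :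
    HasRes (f + g) z (a + b) :=
  (HasVal.add hf hg).congr (by ring) rfl

theorem HasRes.mul_left {f g : RatFunc ℂ} {z a b : ℂ} (hf : HasVal f z a) (hg : HasRes g z b) :
    HasRes (f * g) z (a * b) :=
  (HasVal.mul hf hg).congr (by ring) rfl

theorem HasRes.mul_right {f g : RatFunc ℂ} {z a b : ℂ} (hf : HasRes f z a) (hg : HasVal g z b) :
    HasRes (f * g) z (a * b) :=
  (HasVal.mul hf hg).congr (by ring) rfl

theorem HasRes.unique {f : RatFunc ℂ} {z a b : ℂ} (hf : HasRes f z a) (hg : HasRes f z b) :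
    a = b := HasVal.unique hf hg

theorem HasVal.hasRes {f : RatFunc ℂ} {z a : ℂ} (hf : HasVal f z a) : HasRes f z 0 :=
  (HasVal.mul ((HasVal.X z).sub (HasVal.C z z)) hf).congr rfl (by simp)

theorem X_sub_C_map (z : ℂ) :
    algebraMap ℂ[X] (RatFunc ℂ) (Polynomial.X - Polynomial.C z) = RatFunc.X - RatFunc.C z := by
  simp

theorem X_sub_C_rf_ne_zero (z : ℂ) : (RatFunc.X - RatFunc.C z : RatFunc ℂ) ≠ 0 := by
  rw [← X_sub_C_map]; exact RatFunc.algebraMap_ne_zero (Polynomial.X_sub_C_ne_zero z)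

theorem HasRes.reg {f : RatFunc ℂ} {z : ℂ} (hf : HasRes f z 0) : Reg f z := by
  obtain ⟨p, d, h1, h2, h3⟩ := hf
  rw [zero_mul] at h3
  obtain ⟨p', rfl⟩ := Polynomial.dvd_iff_isRoot.2 h3
  refine ⟨p'.eval z / d.eval z, p', d, h1, ?_, by field_simp⟩
  rw [map_mul, X_sub_C_map] at h2
  apply mul_left_cancel₀ (X_sub_C_rf_ne_zero z)
  rw [← h2]; ring

theorem hasVal_of_denom {f : RatFunc ℂ} {z : ℂ} (h : f.denom.eval z ≠ 0) :
    HasVal f z (f.eval (RingHom.id ℂ) z) := by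
  refine ⟨f.num, f.denom, h, ?_, ?_⟩
  · conv_lhs => rw [← RatFunc.num_div_denom f]
    have := RatFunc.algebraMap_ne_zero (RatFunc.denom_ne_zero f)
    simp only [RatFunc.num_div_denom]
    nth_rewrite 2 [← RatFunc.num_div_denom f]
    field_simp
  · rw [RatFunc.eval]
    change _ = f.num.eval z / f.denom.eval z * _
    field_simp

theorem denom_mul_eq (f : RatFunc ℂ) : algebraMap ℂ[X] (RatFunc ℂ) f.denom * f =
    algebraMap ℂ[X] (RatFunc ℂ) f.num := by
  have := RatFunc.algebraMap_ne_zero (RatFunc.denom_ne_zero f)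
  nth_rewrite 2 [← RatFunc.num_div_denom f]
  field_simp

theorem denom_dvd_of {f : RatFunc ℂ} {p d : ℂ[X]} (hd : d ≠ 0)
    (h : algebraMap ℂ[X] (RatFunc ℂ) d * f = algebraMap ℂ[X] (RatFunc ℂ) p) : f.denom ∣ d := by
  rw [RatFunc.denom_dvd hd]
  refine ⟨p, ?_⟩
  have := RatFunc.algebraMap_ne_zero hd
  rw [← h]; field_simp

theorem Reg.denom {f : RatFunc ℂ} {z : ℂ} (h : Reg f z) : f.denom.eval z ≠ 0 := by
  obtain ⟨c, p, d, h1, h2, h3⟩ := h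
  obtain ⟨e, he⟩ := denom_dvd_of (by rintro rfl; simp at h1) h2
  rw [he, eval_mul] at h1
  exact left_ne_zero_of_mul h1

theorem HasVal.eval_eq {f : RatFunc ℂ} {z c : ℂ} (h : HasVal f z c) :
    f.eval (RingHom.id ℂ) z = c :=
  (hasVal_of_denom (Reg.denom ⟨c, h⟩)).unique h

theorem HasRes.stuff {f : RatFunc ℂ} {z r : ℂ} (h : HasRes f z r) :
    (f.denom.eval z = 0 → f.denom.rootMultiplicity z = 1) ∧ residueAt f z = r := by
  by_cases h0 : f.denom.eval z = 0
  · obtain ⟨e, he⟩ := Polynomial.dvd_iff_isRoot.2 h0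
    obtain ⟨p, d, h1, h2, h3⟩ := h
    have hd : d ≠ 0 := by rintro rfl; simp at h1
    rw [← mul_assoc, ← X_sub_C_map, ← map_mul] at h2
    have hdv := denom_dvd_of (mul_ne_zero hd (Polynomial.X_sub_C_ne_zero z)) h2
    rw [he, mul_comm d, mul_dvd_mul_iff_left (Polynomial.X_sub_C_ne_zero z)] at hdv
    obtain ⟨e', he'⟩ := hdv
    have hez : e.eval z ≠ 0 := by
      rw [he', eval_mul] at h1; exact left_ne_zero_of_mul h1
    have hder : (Polynomial.derivative f.denom).eval z = e.eval z := by
      rw [he]; simp [Polynomial.derivative_mul]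
    constructor
    · intro _
      rw [he, Polynomial.rootMultiplicity_mul (by rw [← he]; exact RatFunc.denom_ne_zero f),
        Polynomial.rootMultiplicity_X_sub_C_self, Polynomial.rootMultiplicity_eq_zero hez]
    · rw [residueAt, if_pos h0, hder, div_eq_iff hez]
      have hk : d * f.num = p * e := by
        apply mul_left_cancel₀ (Polynomial.X_sub_C_ne_zero z)
        apply RatFunc.algebraMap_injective ℂ
        have h4 := denom_mul_eq f
        rw [he] at h4
        simp only [map_mul] at h2 h4 ⊢
        rw [← h2, ← h4]; ring
      have := congrArg (Polynomial.eval z) hk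
      rw [eval_mul, eval_mul, h3] at this
      apply mul_left_cancel₀ h1
      rw [this]; ring
  · refine ⟨fun h => absurd h h0, ?_⟩
    rw [residueAt, if_neg h0]
    exact ((hasVal_of_denom h0).hasRes).unique h

theorem hasRes_of_mult {f : RatFunc ℂ} {z : ℂ}
    (h : f.denom.eval z = 0 → f.denom.rootMultiplicity z = 1) :
    HasRes f z (residueAt f z) := by
  suffices ∃ r, HasRes f z r by
    obtain ⟨r, hr⟩ := this
    rw [hr.stuff.2]; exact hr
  by_cases h0 : f.denom.eval z = 0
  · obtain ⟨e, he⟩ := Polynomial.dvd_iff_isRoot.2 h0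
    have h1 := h h0
    rw [he, Polynomial.rootMultiplicity_mul (by rw [← he]; exact RatFunc.denom_ne_zero f),
        Polynomial.rootMultiplicity_X_sub_C_self] at h1
    have he0 : e ≠ 0 := by rintro rfl; exact RatFunc.denom_ne_zero f (by simp [he])
    have hez : e.eval z ≠ 0 := by
      intro hz
      have := (Polynomial.rootMultiplicity_pos he0).2 hz
      omega
    refine ⟨f.num.eval z / e.eval z, f.num, e, hez, ?_, by field_simp⟩
    rw [← denom_mul_eq f, he, map_mul, X_sub_C_map]; ring
  · exact ⟨0, (hasVal_of_denom h0).hasRes⟩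

/-! ### The inversion `v ↦ v⁻¹` -/

theorem trans_Xinv : Transcendental ℂ (RatFunc.X⁻¹ : RatFunc ℂ) := by
  intro h
  exact RatFunc.transcendental_X (K := ℂ) (by simpa using h.inv)

theorem aeval_Xinv_inj :
    Function.Injective (Polynomial.aeval (RatFunc.X⁻¹ : RatFunc ℂ) : ℂ[X] →ₐ[ℂ] RatFunc ℂ) :=
  transcendental_iff_injective.1 trans_Xinv

/-- The automorphism `v ↦ v⁻¹` of the field of rational functions. -/
def invK : RatFunc ℂ →ₐ[ℂ] RatFunc ℂ :=
  RatFunc.liftAlgHom (Polynomial.aeval (RatFunc.X⁻¹ : RatFunc ℂ))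
    (nonZeroDivisors_le_comap_nonZeroDivisors_of_injective _ aeval_Xinv_inj)

theorem invK_map (p : ℂ[X]) :
    invK (algebraMap ℂ[X] (RatFunc ℂ) p) = Polynomial.aeval (RatFunc.X⁻¹ : RatFunc ℂ) p := by
  have := RatFunc.liftAlgHom_apply_div (Polynomial.aeval (RatFunc.X⁻¹ : RatFunc ℂ))
    (nonZeroDivisors_le_comap_nonZeroDivisors_of_injective _ aeval_Xinv_inj) p 1
  simpa [invK] using this

theorem invK_C (c : ℂ) : invK (RatFunc.C c) = RatFunc.C c := by
  rw [← RatFunc.algebraMap_eq_C]; exact invK.commutes c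

theorem invK_X : invK RatFunc.X = RatFunc.X⁻¹ := by
  rw [← RatFunc.algebraMap_X, invK_map]; simp

theorem invK_inj : Function.Injective invK := invK.toRingHom.injective

theorem invK_Inv (f : RatFunc ℂ) : invK (invK f) = f := by
  have h : ∀ p : ℂ[X], invK (invK (algebraMap ℂ[X] (RatFunc ℂ) p)) =
      algebraMap ℂ[X] (RatFunc ℂ) p := by
    intro p
    rw [invK_map, ← Polynomial.aeval_algHom_apply, map_inv₀, invK_X, inv_inv]
    exact RatFunc.aeval_X_left_eq_algebraMap p
  rw [← RatFunc.num_div_denom f, map_div₀, map_div₀, h, h]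

theorem HasVal.inversion {f : RatFunc ℂ} {z c : ℂ} (hz : z ≠ 0) (h : HasVal f z⁻¹ c) :
    HasVal (invK f) z c := by
  have key : ∀ p : ℂ[X], HasVal (Polynomial.aeval (RatFunc.X⁻¹ : RatFunc ℂ) p) z (p.eval z⁻¹) := by
    intro p
    induction p using Polynomial.induction_on' with
    | add p r hp hr => rw [map_add, eval_add]; exact hp.add hr
    | monomial n a =>
      rw [Polynomial.aeval_monomial, eval_monomial, RatFunc.algebraMap_eq_C]
      exact (HasVal.C a z).mul (((HasVal.X z).inv hz).pow n)
  obtain ⟨p, d, h1, h2, h3⟩ := h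
  have h4 := congrArg invK h2
  rw [map_mul, invK_map, invK_map] at h4
  have h5 : Polynomial.aeval (RatFunc.X⁻¹ : RatFunc ℂ) d ≠ 0 := by
    rw [Ne, map_eq_zero_iff _ aeval_Xinv_inj]; rintro rfl; simp at h1
  refine ((key p).mul ((key d).inv h1)).congr ?_ ?_
  · rw [← h4, mul_comm (Polynomial.aeval _ d), mul_assoc, mul_inv_cancel₀ h5, mul_one]
  · rw [h3, mul_assoc, mul_inv_cancel₀ h1, mul_one]

theorem eq_of_values {f g : RatFunc ℂ} (s : Set ℂ) (hs : s.Infinite)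
    (h : ∀ z ∈ s, ∃ c, HasVal f z c ∧ HasVal g z c) : f = g := by
  have h1 : f.num * g.denom = g.num * f.denom := by
    apply Polynomial.eq_of_infinite_eval_eq
    refine hs.mono ?_
    intro z hz
    obtain ⟨c, hf, hg⟩ := h z hz
    have hf' := Reg.denom ⟨c, hf⟩
    have hg' := Reg.denom ⟨c, hg⟩
    have e1 := hf.eval_eq
    have e2 := hg.eval_eq
    change f.num.eval z / f.denom.eval z = c at e1
    change g.num.eval z / g.denom.eval z = c at e2
    rw [div_eq_iff hf'] at e1
    rw [div_eq_iff hg'] at e2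
    simp only [Set.mem_ofPred_eq, eval_mul, e1, e2]; ring
  have hf := RatFunc.algebraMap_ne_zero (RatFunc.denom_ne_zero f)
  have hg := RatFunc.algebraMap_ne_zero (RatFunc.denom_ne_zero g)
  rw [← RatFunc.num_div_denom f, ← RatFunc.num_div_denom g, div_eq_div_iff hf hg, ← map_mul,
    ← map_mul, h1]

/-- A rational function regular outside `0` is a Laurent polynomial. -/
theorem laurent_of_reg {f : RatFunc ℂ} (h : ∀ z, z ≠ 0 → Reg f z) :
    ∃ (p : ℂ[X]) (N : ℕ), f = algebraMap ℂ[X] (RatFunc ℂ) p * (RatFunc.X ^ N)⁻¹ := by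
  have hs : f.denom.Splits := IsAlgClosed.splits _
  have hr : f.denom.roots = Multiset.replicate (Multiset.card f.denom.roots) 0 := by
    rw [Multiset.eq_replicate]
    refine ⟨rfl, fun b hb => ?_⟩
    by_contra hb0
    exact (h b hb0).denom (Polynomial.isRoot_of_mem_roots hb)
  have h2 : f.denom = Polynomial.X ^ (Multiset.card f.denom.roots) := by
    have := hs.eq_prod_roots
    rw [(RatFunc.monic_denom f).leadingCoeff, hr] at this
    simpa using this
  refine ⟨f.num, Multiset.card f.denom.roots, ?_⟩
  have := denom_mul_eq f
  rw [h2] at this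
  rw [← this]
  simp only [map_pow, RatFunc.algebraMap_X]
  have := RatFunc.X_ne_zero (K := ℂ)
  rw [mul_comm (RatFunc.X ^ _), mul_assoc]
  simp [this]

/-! ### Operators -/

theorem mulOp_apply (q : ℝ) (f : RatFunc ℂ) (g : Dom q → ℂ) (z : Dom q) :
    mulOp q f g z = f.eval (RingHom.id ℂ) z.1 * g z := rfl

theorem shiftOp_apply {q : ℝ} (hq : 0 < q) (k : ℤ) (g : Dom q → ℂ) (z : Dom q) :
    shiftOp hq k g z = g (shiftMem hq k z) := rfl

theorem shiftMem_val {q : ℝ} (hq : 0 < q) (k : ℤ) (z : Dom q) :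
    (shiftMem hq k z).1 = (q : ℂ) ^ k * z.1 := rfl

theorem shiftMem_shiftMem {q : ℝ} (hq : 0 < q) (j k : ℤ) (z : Dom q) :
    shiftMem hq j (shiftMem hq k z) = shiftMem hq (j + k) z := by
  have hq0 : (q : ℂ) ≠ 0 := by exact_mod_cast hq.ne'
  apply Subtype.ext
  rw [shiftMem_val, shiftMem_val, shiftMem_val, zpow_add₀ hq0, mul_assoc]

theorem shiftMem_zero {q : ℝ} (hq : 0 < q) (z : Dom q) : shiftMem hq 0 z = z := by
  apply Subtype.ext
  rw [shiftMem_val]; simp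

/-- Regularity on the domain. -/
def RegDom (q : ℝ) (f : RatFunc ℂ) : Prop := ∀ z : Dom q, Reg f z.1

theorem mulOp_zero (q : ℝ) : mulOp q 0 = 0 := by
  ext g z
  simp [mulOp_apply]

theorem mulOp_add {q : ℝ} {f g : RatFunc ℂ} (hf : RegDom q f) (hg : RegDom q g) :
    mulOp q (f + g) = mulOp q f + mulOp q g := by
  ext h z
  obtain ⟨a, ha⟩ := hf z
  obtain ⟨b, hb⟩ := hg z
  rw [LinearMap.add_apply, Pi.add_apply, mulOp_apply, mulOp_apply, mulOp_apply, (ha.add hb).eval_eq,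
    ha.eval_eq, hb.eval_eq]; ring

theorem mulOp_C_mul {q : ℝ} {f : RatFunc ℂ} (c : ℂ) (hf : RegDom q f) :
    mulOp q (RatFunc.C c * f) = c • mulOp q f := by
  ext h z
  obtain ⟨a, ha⟩ := hf z
  rw [LinearMap.smul_apply, Pi.smul_apply, mulOp_apply, mulOp_apply,
    ((HasVal.C c _).mul ha).eval_eq, ha.eval_eq, smul_eq_mul]; ring

theorem wform_eq_sum {q : ℝ} (hq : 0 < q) (F : ℤ →₀ RatFunc ℂ) (s : Finset ℤ)
    (hs : F.support ⊆ s) : wform hq F = ∑ i ∈ s, shiftOp hq i * mulOp q (F i) := by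
  rw [wform, Finsupp.sum]
  apply Finset.sum_subset hs
  intro i _ hi
  rw [Finsupp.notMem_support_iff.1 hi, mulOp_zero, mul_zero]

theorem wform_add {q : ℝ} (hq : 0 < q) (F G : ℤ →₀ RatFunc ℂ) (hF : ∀ i, RegDom q (F i))
    (hG : ∀ i, RegDom q (G i)) : wform hq (F + G) = wform hq F + wform hq G := by
  classical
  have h1 : F.support ⊆ F.support ∪ G.support := Finset.subset_union_left
  have h2 : G.support ⊆ F.support ∪ G.support := Finset.subset_union_right
  rw [wform_eq_sum hq F _ h1, wform_eq_sum hq G _ h2, wform_eq_sum hq (F + G) _ Finsupp.support_add,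
    ← Finset.sum_add_distrib]
  refine Finset.sum_congr rfl fun i _ => ?_
  rw [Finsupp.add_apply, mulOp_add (hF i) (hG i), mul_add]

theorem wform_smul {q : ℝ} (hq : 0 < q) (c : ℂ) (F : ℤ →₀ RatFunc ℂ) (hF : ∀ i, RegDom q (F i)) :
    wform hq (c • F) = c • wform hq F := by
  classical
  rw [wform_eq_sum hq (c • F) _ Finsupp.support_smul, wform_eq_sum hq F _ (le_refl _),
    Finset.smul_sum]
  refine Finset.sum_congr rfl fun i _ => ?_
  rw [Finsupp.smul_apply, RatFunc.smul_eq_C_mul, mulOp_C_mul _ (hF i), mul_smul_comm]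

/-- Shift by `e` and multiply by the coefficients `Ψ`. -/
def shiftF (e : ℤ) (Ψ : ℤ → RatFunc ℂ) (F : ℤ →₀ RatFunc ℂ) : ℤ →₀ RatFunc ℂ :=
  Finsupp.ofSupportFinite (fun n => Ψ (n - e) * F (n - e)) <| by
    refine (F.support.finite_toSet.image (fun j => j + e)).subset ?_
    intro n hn
    refine ⟨n - e, ?_, by simp⟩
    simp only [Function.mem_support] at hn
    simpa using right_ne_zero_of_mul hn

theorem shiftF_apply (e : ℤ) (Ψ : ℤ → RatFunc ℂ) (F : ℤ →₀ RatFunc ℂ) (n : ℤ) :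
    shiftF e Ψ F n = Ψ (n - e) * F (n - e) := rfl

theorem shiftF_reg {q : ℝ} (e : ℤ) (Ψ : ℤ → RatFunc ℂ) (F : ℤ →₀ RatFunc ℂ)
    (hF : ∀ i, RegDom q (F i)) (hΨ : ∀ i, RegDom q (Ψ i)) (i : ℤ) :
    RegDom q (shiftF e Ψ F i) := by
  intro z
  obtain ⟨a, ha⟩ := hΨ (i - e) z
  obtain ⟨b, hb⟩ := hF (i - e) z
  exact ⟨_, ha.mul hb⟩

theorem op_mul_wform {q : ℝ} (hq : 0 < q) (e : ℤ) (φ : RatFunc ℂ) (Ψ : ℤ → RatFunc ℂ)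
    (F : ℤ →₀ RatFunc ℂ) (hF : ∀ i, RegDom q (F i))
    (hΨ : ∀ (j : ℤ) (z : Dom q), ∃ c, HasVal (Ψ j) z.1 c ∧ HasVal φ ((q : ℂ) ^ (-j) * z.1) c) :
    (shiftOp hq e * mulOp q φ) * wform hq F = wform hq (shiftF e Ψ F) := by
  classical
  have hq0 : (q : ℂ) ≠ 0 := by exact_mod_cast hq.ne'
  have hs : (shiftF e Ψ F).support ⊆ F.support.map (Equiv.addRight e).toEmbedding := by
    intro n hn
    rw [Finsupp.mem_support_iff, shiftF_apply] at hn
    rw [Finset.mem_map]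
    exact ⟨n - e, Finsupp.mem_support_iff.2 (right_ne_zero_of_mul hn), by simp⟩
  rw [wform_eq_sum hq _ _ hs, wform_eq_sum hq F _ (le_refl _), Finset.mul_sum, Finset.sum_map]
  refine Finset.sum_congr rfl fun j _ => ?_
  simp only [Equiv.coe_toEmbedding, Equiv.coe_addRight, shiftF_apply, add_sub_cancel_right]
  refine LinearMap.ext fun g => funext fun z => ?_
  simp only [Module.End.mul_apply, shiftOp_apply, mulOp_apply, shiftMem_shiftMem]
  obtain ⟨c, h1, h2⟩ := hΨ j (shiftMem hq (j + e) z)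
  obtain ⟨b, hb⟩ := hF j (shiftMem hq (j + e) z)
  have : (q : ℂ) ^ (-j) * (shiftMem hq (j + e) z).1 = (shiftMem hq e z).1 := by
    rw [shiftMem_val, shiftMem_val, ← mul_assoc, ← zpow_add₀ hq0]; congr 2; ring
  rw [this] at h2
  rw [h2.eval_eq, hb.eval_eq, (h1.mul hb).eval_eq]; ring

/-! ### The functions `φ` -/

/-- `(c v)^k / (c v - (c v)⁻¹)`. -/
def Phi (c : ℂ) (k : ℤ) : RatFunc ℂ :=
  (RatFunc.C c * RatFunc.X) ^ k * (RatFunc.C c * RatFunc.X - (RatFunc.C c * RatFunc.X)⁻¹)⁻¹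

/-- `x^k / (x - x⁻¹)`. -/
def phiVal (k : ℤ) (x : ℂ) : ℂ := x ^ k * (x - x⁻¹)⁻¹

theorem sub_inv_ne {x : ℂ} (h0 : x ≠ 0) (h1 : x ^ 2 ≠ 1) : x - x⁻¹ ≠ 0 := by
  intro h
  apply h1
  field_simp at h
  linear_combination h

theorem Phi_val {c : ℂ} {k : ℤ} {z x : ℂ} (hx : c * z = x) (h0 : x ≠ 0) (h1 : x ^ 2 ≠ 1) :
    HasVal (Phi c k) z (phiVal k x) := by
  have h : HasVal (RatFunc.C c * RatFunc.X) z x := hx ▸ (HasVal.C c z).mul (HasVal.X z)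
  exact (h.zpow h0 k).mul ((h.sub (h.inv h0)).inv (sub_inv_ne h0 h1))

theorem phiVal_neg (k : ℤ) {x : ℂ} : phiVal (-k) x⁻¹ = - phiVal k x := by
  rw [phiVal, phiVal, inv_zpow', neg_neg, inv_inv, ← neg_sub x x⁻¹, inv_neg]; ring

theorem Phi_res {c z ε : ℂ} {k : ℤ} (hε : ε ^ 2 = 1) (hc : c ≠ 0) (hz : c * z = ε) :
    HasRes (Phi c k) z (ε ^ k * (z * (ε + ε)⁻¹)) := by
  have hε0 : ε ≠ 0 := by rintro rfl; simp at hε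
  have h : HasVal (RatFunc.C c * RatFunc.X) z ε := hz ▸ (HasVal.C c z).mul (HasVal.X z)
  have h2 : HasVal (RatFunc.X * (RatFunc.C c * RatFunc.X + RatFunc.C ε)⁻¹) z
      (z * (ε + ε)⁻¹) := (HasVal.X z).mul ((h.add (HasVal.C ε z)).inv (by
        rw [← two_mul]; exact mul_ne_zero two_ne_zero hε0))
  refine ((h.zpow hε0 k).mul h2).congr ?_ rfl
  have hX := RatFunc.X_ne_zero (K := ℂ)
  have hC : (RatFunc.C c : RatFunc ℂ) ≠ 0 := by simpa using hc
  have hm := X_sub_C_rf_ne_zero z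
  have hp : (RatFunc.X - RatFunc.C (-z) : RatFunc ℂ) ≠ 0 := X_sub_C_rf_ne_zero (-z)
  rw [map_neg, sub_neg_eq_add] at hp
  have e1 : (RatFunc.C ε : RatFunc ℂ) = RatFunc.C c * RatFunc.C z := by rw [← map_mul, hz]
  have e2 : (RatFunc.C c * RatFunc.C z : RatFunc ℂ) ^ 2 = 1 := by
    rw [← e1, ← map_pow, hε, map_one]
  rw [Phi, e1]
  have e3 : (RatFunc.C c * RatFunc.X - (RatFunc.C c * RatFunc.X)⁻¹ : RatFunc ℂ) =
      RatFunc.C c * (RatFunc.X - RatFunc.C z) * (RatFunc.X + RatFunc.C z) * RatFunc.X⁻¹ := by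
    field_simp
    linear_combination e2
  rw [e3, ← mul_add]
  field_simp

theorem invK_Phi {c : ℂ} {k : ℤ} : invK (Phi c k) = - Phi c⁻¹ (-k) := by
  have e1 : invK (RatFunc.C c * RatFunc.X) = (RatFunc.C c⁻¹ * RatFunc.X)⁻¹ := by
    rw [map_mul, invK_C, invK_X, mul_inv, map_inv₀, inv_inv]
  rw [Phi, Phi, map_mul, map_zpow₀, map_inv₀, map_sub, map_inv₀, e1, inv_inv, inv_zpow',
    ← neg_sub _ (RatFunc.C c⁻¹ * RatFunc.X)⁻¹]
  have h : ∀ y : RatFunc ℂ, (-y)⁻¹ = -y⁻¹ := fun y => inv_neg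
  rw [h, mul_neg]

theorem qc_ne {q : ℝ} (hq : 0 < q) : (q : ℂ) ≠ 0 := by exact_mod_cast hq.ne'

theorem qpow_sq_ne {q : ℝ} (hq : 0 < q) (hq1 : q < 1) {i : ℤ} (hi : i ≠ 0) {ε : ℂ}
    (hε : ε ^ 2 = 1) : (ε * (q : ℂ) ^ i) ^ 2 ≠ 1 := by
  rw [mul_pow, hε, one_mul, ← zpow_natCast, ← zpow_mul]
  intro h
  have h' : q ^ (i * (2 : ℕ)) = 1 := by exact_mod_cast h
  rw [zpow_eq_one_iff_right₀ hq.le hq1.ne] at h'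
  simp at h'; exact hi h'

theorem eps_cases {ε : ℂ} (hε : ε ^ 2 = 1) : ε = 1 ∨ ε = -1 := by
  have h : (ε - 1) * (ε + 1) = 0 := by linear_combination hε
  rcases mul_eq_zero.1 h with h | h
  · left; linear_combination h
  · right; linear_combination h

theorem eps_inv {ε : ℂ} (hε : ε ^ 2 = 1) : ε⁻¹ = ε := by
  rcases eps_cases hε with rfl | rfl <;> norm_num

theorem eps_zpow_neg {ε : ℂ} (hε : ε ^ 2 = 1) (k : ℤ) : ε ^ (-k) = ε ^ k := by
  rw [← inv_zpow', eps_inv hε]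

theorem Dom.sq_ne {q : ℝ} (hq : 0 < q) (z : Dom q) (j : ℤ) :
    ((q : ℂ) ^ (-j) * z.1) ^ 2 ≠ 1 := by
  intro h
  have hq0 := qc_ne hq
  have hj := zpow_ne_zero j hq0
  rcases eps_cases h with h | h
  · apply (z.2.2 j).1
    rw [zpow_neg] at h
    field_simp at h; exact h
  · apply (z.2.2 j).2
    rw [zpow_neg] at h
    field_simp at h; exact h

theorem Phi_dom {q : ℝ} (hq : 0 < q) (j k : ℤ) (z : Dom q) :
    HasVal (Phi ((q : ℂ) ^ (-j)) k) z.1 (phiVal k ((q : ℂ) ^ (-j) * z.1)) :=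
  Phi_val rfl (mul_ne_zero (zpow_ne_zero _ (qc_ne hq)) z.2.1) (Dom.sq_ne hq z j)

/-! ### The conditions of the theorem, in convenient form -/

/-- The conditions of the theorem. -/
structure Good (q : ℝ) (F : ℤ →₀ RatFunc ℂ) : Prop where
  reg : ∀ i, RegDom q (F i)
  sym : ∀ i, invK (F (-i)) = RatFunc.C ((-1) ^ i) * F i
  res : ∀ (i k : ℤ) (ε : ℂ), ε ^ 2 = 1 → ∃ r, HasRes (F (i - k)) (ε * (q : ℂ) ^ i) r ∧
    HasRes (F (i + k)) (ε * (q : ℂ) ^ i) (-(-1) ^ k * r)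

theorem Good.zero (q : ℝ) : Good q 0 where
  reg i z := ⟨0, HasVal.zero _⟩
  sym i := by simp
  res i k ε hε := ⟨0, (HasVal.zero _).hasRes, (HasVal.zero _).hasRes.congr rfl (by simp)⟩

theorem Good.add {q : ℝ} {F G : ℤ →₀ RatFunc ℂ} (hF : Good q F) (hG : Good q G) :
    Good q (F + G) where
  reg i z := by
    obtain ⟨a, ha⟩ := hF.reg i z
    obtain ⟨b, hb⟩ := hG.reg i z
    exact ⟨_, ha.add hb⟩
  sym i := by
    simp only [Finsupp.add_apply, map_add, hF.sym, hG.sym]; ring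
  res i k ε hε := by
    obtain ⟨r, h1, h2⟩ := hF.res i k ε hε
    obtain ⟨s, h3, h4⟩ := hG.res i k ε hε
    exact ⟨_, h1.add h3, (h2.add h4).congr rfl (by ring)⟩

theorem Good.smul {q : ℝ} {F : ℤ →₀ RatFunc ℂ} (c : ℂ) (hF : Good q F) : Good q (c • F) where
  reg i z := by
    obtain ⟨a, ha⟩ := hF.reg i z
    rw [Finsupp.smul_apply, RatFunc.smul_eq_C_mul]
    exact ⟨_, (HasVal.C c _).mul ha⟩
  sym i := by
    simp only [Finsupp.smul_apply, RatFunc.smul_eq_C_mul, map_mul, hF.sym, invK_C]; ring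
  res i k ε hε := by
    obtain ⟨r, h1, h2⟩ := hF.res i k ε hε
    simp only [Finsupp.smul_apply, RatFunc.smul_eq_C_mul]
    exact ⟨_, h1.mul_left (HasVal.C c _), (h2.mul_left (HasVal.C c _)).congr rfl (by ring)⟩

theorem Good.reg_self {q : ℝ} {F : ℤ →₀ RatFunc ℂ} (hF : Good q F) (i : ℤ) {ε : ℂ}
    (hε : ε ^ 2 = 1) : Reg (F i) (ε * (q : ℂ) ^ i) := by
  obtain ⟨r, h1, h2⟩ := hF.res i 0 ε hε
  rw [sub_zero] at h1
  rw [add_zero] at h2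
  have h := h1.unique h2
  have h0 : r = 0 := by
    rw [zpow_zero] at h
    have : 2 * r = 0 := by linear_combination h
    simpa using this
  rw [h0] at h1
  exact h1.reg

theorem neg_one_sq_zpow (k : ℤ) : ((-1 : ℂ) ^ k) ^ 2 = 1 := by
  rw [← zpow_natCast, ← zpow_mul, mul_comm, zpow_mul]; simp

/-- Left multiplication by `v^a + v^{-a}`. -/
def symF (q : ℝ) (a j : ℤ) : RatFunc ℂ :=
  (RatFunc.C ((q : ℂ) ^ (-j)) * RatFunc.X) ^ a + (RatFunc.C ((q : ℂ) ^ (-j)) * RatFunc.X) ^ (-a)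

theorem symF_val {q : ℝ} (hq : 0 < q) (a j : ℤ) {z x : ℂ} (hz : z ≠ 0)
    (hx : (q : ℂ) ^ (-j) * z = x) : HasVal (symF q a j) z (x ^ a + x ^ (-a)) := by
  have h : HasVal (RatFunc.C ((q : ℂ) ^ (-j)) * RatFunc.X) z x :=
    hx ▸ (HasVal.C _ z).mul (HasVal.X z)
  have h0 : x ≠ 0 := hx ▸ mul_ne_zero (zpow_ne_zero _ (qc_ne hq)) hz
  exact (h.zpow h0 a).add (h.zpow h0 (-a))

theorem Good.symMul {q : ℝ} (hq : 0 < q) (a : ℤ) {F : ℤ →₀ RatFunc ℂ} (hF : Good q F) :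
    Good q (shiftF 0 (symF q a) F) where
  reg := shiftF_reg 0 _ F hF.reg fun i z => ⟨_, symF_val hq a i z.2.1 rfl⟩
  sym i := by
    have e1 : invK (symF q a (-i)) = symF q a i := by
      have e2 : invK (RatFunc.C ((q : ℂ) ^ (-(-i))) * RatFunc.X) =
          (RatFunc.C ((q : ℂ) ^ (-i)) * RatFunc.X)⁻¹ := by
        rw [map_mul, invK_C, invK_X, mul_inv, ← map_inv₀, ← zpow_neg]
      rw [symF, symF, map_add, map_zpow₀ invK, map_zpow₀ invK, e2, inv_zpow', inv_zpow', neg_neg, add_comm]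
    rw [shiftF_apply, shiftF_apply, sub_zero, sub_zero, map_mul, hF.sym, e1]; ring
  res i k ε hε := by
    have hq0 := qc_ne hq
    have hε0 : ε ≠ 0 := by rintro rfl; simp at hε
    obtain ⟨r, h1, h2⟩ := hF.res i k ε hε
    have hz : ε * (q : ℂ) ^ i ≠ 0 := mul_ne_zero hε0 (zpow_ne_zero _ hq0)
    have e1 : (q : ℂ) ^ (-(i - k)) * (ε * (q : ℂ) ^ i) = ε * (q : ℂ) ^ k := by
      rw [mul_left_comm, ← zpow_add₀ hq0]; congr 2; ring
    have e2 : (q : ℂ) ^ (-(i + k)) * (ε * (q : ℂ) ^ i) = (ε * (q : ℂ) ^ k)⁻¹ := by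
      rw [mul_left_comm, ← zpow_add₀ hq0, mul_inv, eps_inv hε, ← zpow_neg]; congr 2; ring
    simp only [shiftF_apply, sub_zero]
    refine ⟨_, h1.mul_left (symF_val hq a (i - k) hz e1),
      (h2.mul_left (symF_val hq a (i + k) hz e2)).congr rfl ?_⟩
    rw [inv_zpow', inv_zpow', neg_neg]; ring

/-- Left multiplication by `q^a (v^a u₊ + v^{-a} u₋)`. -/
def eMul (q : ℝ) (a : ℤ) (F : ℤ →₀ RatFunc ℂ) : ℤ →₀ RatFunc ℂ :=
  shiftF 1 (fun j => Phi ((q : ℂ) ^ (-j)) a) F + shiftF (-1) (fun j => Phi ((q : ℂ) ^ (-j)) (-a)) F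

theorem eMul_apply (q : ℝ) (a : ℤ) (F : ℤ →₀ RatFunc ℂ) (n : ℤ) :
    eMul q a F n = Phi ((q : ℂ) ^ (-(n - 1))) a * F (n - 1) +
      Phi ((q : ℂ) ^ (-(n + 1))) (-a) * F (n + 1) := by
  rw [eMul, Finsupp.add_apply, shiftF_apply, shiftF_apply, sub_neg_eq_add]

theorem Good.eMul_res {q : ℝ} (hq : 0 < q) (hq1 : q < 1) (a : ℤ) {F : ℤ →₀ RatFunc ℂ}
    (hF : Good q F) (i k : ℤ) (ε : ℂ) (hε : ε ^ 2 = 1) (hk : k ≠ -1) :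
    ∃ r, HasRes (eMul q a F (i - k)) (ε * (q : ℂ) ^ i) r ∧
      HasRes (eMul q a F (i + k)) (ε * (q : ℂ) ^ i) (-(-1) ^ k * r) := by
  have hq0 := qc_ne hq
  have hε0 : ε ≠ 0 := by rintro rfl; simp at hε
  have hx : ∀ j : ℤ, ε * (q : ℂ) ^ j ≠ 0 := fun j => mul_ne_zero hε0 (zpow_ne_zero _ hq0)
  have hxi : ∀ j : ℤ, ε * (q : ℂ) ^ (-j) = (ε * (q : ℂ) ^ j)⁻¹ := fun j => by
    rw [mul_inv, eps_inv hε, ← zpow_neg]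
  have hmul : ∀ l m : ℤ, m = i - l →
      (q : ℂ) ^ (-l) * (ε * (q : ℂ) ^ i) = ε * (q : ℂ) ^ m := fun l m h => by
    rw [mul_left_comm, ← zpow_add₀ hq0, h]; congr 2; ring
  have hval : ∀ l m b : ℤ, m = i - l → m ≠ 0 →
      HasVal (Phi ((q : ℂ) ^ (-l)) b) (ε * (q : ℂ) ^ i) (phiVal b (ε * (q : ℂ) ^ m)) :=
    fun l m b h hm => Phi_val (hmul l m h) (hx m) (qpow_sq_ne hq hq1 hm hε)
  have hs := neg_one_sq_zpow k
  rw [eMul_apply, eMul_apply]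
  obtain ⟨r₁, h1, h2⟩ := hF.res i (k + 1) ε hε
  have A := (h1.congr (g := F (i - k - 1)) (by congr 1; ring) rfl).mul_left
    (hval (i - k - 1) (k + 1) a (by ring) (by omega))
  have B := (h2.congr (g := F (i + k + 1)) (by congr 1; ring) rfl).mul_left
    (hval (i + k + 1) (-(k + 1)) (-a) (by ring) (by omega))
  rw [hxi, phiVal_neg, zpow_add_one₀ (a := (-1 : ℂ)) (by norm_num)] at B
  by_cases hk1 : k = 1
  · subst hk1
    obtain ⟨c, hc⟩ := hF.reg_self i hε
    have hone : (q : ℂ) ^ (-i) * (ε * (q : ℂ) ^ i) = ε := by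
      rw [hmul i 0 (by ring)]; simp
    have P := Phi_res (k := a) hε (zpow_ne_zero (-i) hq0) hone
    have M := Phi_res (k := -a) hε (zpow_ne_zero (-i) hq0) hone
    have P' := P.mul_right hc
    have M' := M.mul_right hc
    rw [eps_zpow_neg hε] at M'
    have e1 : i - 1 + 1 = i := by ring
    have e2 : i + 1 - 1 = i := by ring
    rw [e1, e2]
    refine ⟨_, A.add M', (P'.add B).congr rfl ?_⟩
    norm_num
    ring
  · obtain ⟨r₂, h3, h4⟩ := hF.res i (k - 1) ε hε
    have C := (h3.congr (g := F (i - k + 1)) (by congr 1; ring) rfl).mul_left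
      (hval (i - k + 1) (k - 1) (-a) (by ring) (by omega))
    have D := (h4.congr (g := F (i + k - 1)) (by congr 1; ring) rfl).mul_left
      (hval (i + k - 1) (-(k - 1)) a (by ring) (by omega))
    have hph := phiVal_neg (-a) (x := ε * (q : ℂ) ^ (k - 1))
    rw [neg_neg] at hph
    rw [hxi, hph, zpow_sub_one₀ (a := (-1 : ℂ)) (by norm_num)] at D
    refine ⟨_, A.add C, (D.add B).congr rfl ?_⟩
    norm_num
    ring

theorem Good.eMul {q : ℝ} (hq : 0 < q) (hq1 : q < 1) (a : ℤ) {F : ℤ →₀ RatFunc ℂ}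
    (hF : Good q F) : Good q (eMul q a F) where
  reg i z := by
    obtain ⟨b, hb⟩ := shiftF_reg 1 _ F hF.reg (fun i z => ⟨_, Phi_dom hq i a z⟩) i z
    obtain ⟨c, hc⟩ := shiftF_reg (-1) _ F hF.reg (fun i z => ⟨_, Phi_dom hq i (-a) z⟩) i z
    exact ⟨_, hb.add hc⟩
  sym i := by
    have hm : (-1 : ℂ) ≠ 0 := by norm_num
    have e1 : F (-i - 1) = F (-(i + 1)) := by congr 1; ring
    have e2 : F (-i + 1) = F (-(i - 1)) := by congr 1; ring
    rw [eMul_apply, eMul_apply, map_add, map_mul, map_mul, invK_Phi, invK_Phi, e1, e2, hF.sym,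
      hF.sym, ← zpow_neg, ← zpow_neg, zpow_add_one₀ hm, zpow_sub_one₀ hm]
    have e3 : - -(-i - 1) = -(i + 1) := by ring
    have e4 : - -(-i + 1) = -(i - 1) := by ring
    rw [e3, e4, neg_neg]
    have e5 : (-1 : ℂ)⁻¹ = -1 := by norm_num
    rw [e5, map_mul, map_neg, map_one]
    ring
  res i k ε hε := by
    by_cases hk : k = -1
    · subst hk
      obtain ⟨r, h1, h2⟩ := hF.eMul_res hq hq1 a i 1 ε hε (by norm_num)
      refine ⟨_, h2.congr (by congr 1) rfl, h1.congr (by congr 1) ?_⟩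
      norm_num
    · exact hF.eMul_res hq hq1 a i k ε hε hk

/-! ### Inclusion of `𝒜` in the set -/

/-- The generator, up to scalar. -/
theorem gen_eq {q : ℝ} (hq : 0 < q) (k : ℤ) :
    mulOp q (RatFunc.X ^ k) * uPlus hq + mulOp q (RatFunc.X ^ (-k)) * uMinus hq =
      ((q : ℂ) ^ (-k)) • (shiftOp hq 1 * mulOp q (Phi 1 k) +
        shiftOp hq (-1) * mulOp q (Phi 1 (-k))) := by
  have hq0 := qc_ne hq
  refine LinearMap.ext fun g => funext fun z => ?_
  have hP : ∀ (b : ℤ) (y : Dom q), (Phi 1 b).eval (RingHom.id ℂ) y.1 = phiVal b y.1 := fun b y => by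
    refine (Phi_val (one_mul _) y.2.1 ?_).eval_eq
    have := Dom.sq_ne hq y 0
    simpa using this
  have hX : ∀ (b : ℤ) (y : Dom q), (RatFunc.X ^ b : RatFunc ℂ).eval (RingHom.id ℂ) y.1 = y.1 ^ b :=
    fun b y => ((HasVal.X _).zpow y.2.1 b).eval_eq
  have hD : ∀ (y : Dom q), ((RatFunc.X - RatFunc.X⁻¹)⁻¹ : RatFunc ℂ).eval (RingHom.id ℂ) y.1 =
      (y.1 - y.1⁻¹)⁻¹ := fun y => by
    refine (((HasVal.X _).sub ((HasVal.X _).inv y.2.1)).inv (sub_inv_ne y.2.1 ?_)).eval_eq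
    have := Dom.sq_ne hq y 0
    simpa using this
  simp only [LinearMap.add_apply, LinearMap.smul_apply, Pi.add_apply, Pi.smul_apply,
    Module.End.mul_apply, uPlus, uMinus, mulOp_apply, shiftOp_apply, hP, hX, hD, smul_eq_mul,
    phiVal]
  have hz := z.2.1
  have e1 : z.1 ^ k = (q : ℂ) ^ (-k) * (shiftMem hq 1 z).1 ^ k := by
    rw [shiftMem_val, zpow_one, mul_zpow, ← mul_assoc, ← zpow_add₀ hq0]; simp
  have e2 : z.1 ^ (-k) = (q : ℂ) ^ (-k) * (shiftMem hq (-1) z).1 ^ (-k) := by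
    rw [shiftMem_val, mul_zpow, ← mul_assoc, ← zpow_mul, ← zpow_add₀ hq0]; simp
  rw [e1, e2]; ring

theorem eMul_wform {q : ℝ} (hq : 0 < q) (a : ℤ) {F : ℤ →₀ RatFunc ℂ} (hF : Good q F) :
    (shiftOp hq 1 * mulOp q (Phi 1 a) + shiftOp hq (-1) * mulOp q (Phi 1 (-a))) * wform hq F =
      wform hq (eMul q a F) := by
  have key : ∀ (b j : ℤ) (z : Dom q), ∃ c, HasVal (Phi ((q : ℂ) ^ (-j)) b) z.1 c ∧
      HasVal (Phi 1 b) ((q : ℂ) ^ (-j) * z.1) c := fun b j z =>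
    ⟨_, Phi_dom hq j b z, Phi_val (one_mul _) (mul_ne_zero (zpow_ne_zero _ (qc_ne hq)) z.2.1)
      (Dom.sq_ne hq z j)⟩
  rw [add_mul, op_mul_wform hq 1 _ _ F hF.reg (key a), op_mul_wform hq (-1) _ _ F hF.reg (key (-a)),
    eMul, wform_add]
  · exact shiftF_reg 1 _ F hF.reg (fun i z => ⟨_, Phi_dom hq i a z⟩)
  · exact shiftF_reg (-1) _ F hF.reg (fun i z => ⟨_, Phi_dom hq i (-a) z⟩)

theorem shiftOp_zero {q : ℝ} (hq : 0 < q) : shiftOp hq 0 = 1 := by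
  refine LinearMap.ext fun g => funext fun z => ?_
  rw [shiftOp_apply, shiftMem_zero]; rfl

theorem symMul_wform {q : ℝ} (hq : 0 < q) (a : ℤ) {F : ℤ →₀ RatFunc ℂ} (hF : Good q F) :
    mulOp q (RatFunc.X ^ a + RatFunc.X ^ (-a)) * wform hq F =
      wform hq (shiftF 0 (symF q a) F) := by
  rw [← op_mul_wform hq 0 (RatFunc.X ^ a + RatFunc.X ^ (-a)) (symF q a) F hF.reg, shiftOp_zero,
    one_mul]
  intro j z
  have h0 := mul_ne_zero (zpow_ne_zero (-j) (qc_ne hq)) z.2.1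
  exact ⟨_, symF_val hq a j z.2.1 rfl, ((HasVal.X _).zpow h0 a).add ((HasVal.X _).zpow h0 (-a))⟩

theorem Good.one (q : ℝ) : Good q (Finsupp.single 0 1) where
  reg i z := by
    by_cases h : i = 0
    · subst h; rw [Finsupp.single_eq_same]; exact ⟨_, HasVal.one _⟩
    · rw [Finsupp.single_eq_of_ne h]; exact ⟨_, HasVal.zero _⟩
  sym i := by
    by_cases h : i = 0
    · subst h; simp
    · rw [Finsupp.single_eq_of_ne h, Finsupp.single_eq_of_ne (by simpa using h)]; simp
  res i k ε hε := by
    have : ∀ j : ℤ, HasRes (Finsupp.single (0 : ℤ) (1 : RatFunc ℂ) j) (ε * (q : ℂ) ^ i) 0 := by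
      intro j
      by_cases h : j = 0
      · subst h; simpa using (HasVal.one _).hasRes
      · rw [Finsupp.single_eq_of_ne h]; exact (HasVal.zero _).hasRes
    exact ⟨0, this _, (this _).congr rfl (by simp)⟩

theorem wform_one {q : ℝ} (hq : 0 < q) : wform hq (Finsupp.single 0 1) = 1 := by
  rw [wform_eq_sum hq _ {0} Finsupp.support_single_subset, Finset.sum_singleton, shiftOp_zero,
    one_mul]
  refine LinearMap.ext fun g => funext fun z => ?_
  simp [mulOp_apply]

/-- The set of operators satisfying the conditions, as a submodule. -/
def goodOps {q : ℝ} (hq : 0 < q) : Submodule ℂ (Module.End ℂ (Dom q → ℂ)) where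
  carrier := {a | ∃ F, Good q F ∧ a = wform hq F}
  zero_mem' := ⟨0, Good.zero q, by simp [wform]⟩
  add_mem' := by
    rintro _ _ ⟨F, hF, rfl⟩ ⟨G, hG, rfl⟩
    exact ⟨F + G, hF.add hG, (wform_add hq F G hF.reg hG.reg).symm⟩
  smul_mem' := by
    rintro c _ ⟨F, hF, rfl⟩
    exact ⟨c • F, hF.smul c, (wform_smul hq c F hF.reg).symm⟩

theorem Acal_le {q : ℝ} (hq : 0 < q) (hq1 : q < 1) {a : Module.End ℂ (Dom q → ℂ)}
    (ha : a ∈ Acal hq) : a ∈ goodOps hq := by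
  suffices h : ∀ b ∈ goodOps hq, a * b ∈ goodOps hq by
    have := h 1 ⟨_, Good.one q, (wform_one hq).symm⟩
    simpa using this
  induction ha using Algebra.adjoin_induction with
  | mem x hx =>
    rintro _ ⟨F, hF, rfl⟩
    rcases hx with ⟨k, rfl⟩ | ⟨k, rfl⟩
    · exact ⟨_, hF.symMul hq k, symMul_wform hq k hF⟩
    · dsimp only
      rw [gen_eq, smul_mul_assoc, eMul_wform hq k hF]
      exact Submodule.smul_mem _ _ ⟨_, hF.eMul hq hq1 k, rfl⟩
  | algebraMap r =>
    intro b hb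
    rw [← Algebra.smul_def]; exact Submodule.smul_mem _ _ hb
  | add x y _ _ hx hy =>
    intro b hb
    rw [add_mul]; exact Submodule.add_mem _ (hx b hb) (hy b hb)
  | mul x y _ _ hx hy =>
    intro b hb
    rw [mul_assoc]; exact hx _ (hy b hb)

/-! ### The converse inclusion -/

/-- Good coefficient families whose operator lies in `𝒜`. -/
def goodA {q : ℝ} (hq : 0 < q) : Submodule ℂ (ℤ →₀ RatFunc ℂ) where
  carrier := {F | Good q F ∧ wform hq F ∈ Acal hq}
  zero_mem' := ⟨Good.zero q, by simp [wform]⟩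
  add_mem' := by
    rintro F G ⟨hF, hF'⟩ ⟨hG, hG'⟩
    exact ⟨hF.add hG, by rw [wform_add hq F G hF.reg hG.reg]; exact add_mem hF' hG'⟩
  smul_mem' := by
    rintro c F ⟨hF, hF'⟩
    exact ⟨hF.smul c, by rw [wform_smul hq c F hF.reg]; exact Subalgebra.smul_mem _ hF' c⟩

/-- Possible top coefficients of elements of `𝒜`. -/
def topSet {q : ℝ} (hq : 0 < q) (n : ℤ) : Submodule ℂ (RatFunc ℂ) where
  carrier := {g | ∃ G ∈ goodA hq, (∀ i, n < i → G i = 0) ∧ G n = g}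
  zero_mem' := ⟨0, zero_mem _, by simp, by simp⟩
  add_mem' := by
    rintro _ _ ⟨G, hG, h1, rfl⟩ ⟨G', hG', h1', rfl⟩
    exact ⟨G + G', add_mem hG hG', fun i hi => by simp [h1 i hi, h1' i hi], rfl⟩
  smul_mem' := by
    rintro c _ ⟨G, hG, h1, rfl⟩
    exact ⟨c • G, Submodule.smul_mem _ c hG, fun i hi => by simp [h1 i hi], rfl⟩

/-- Possible symmetrized constant terms. -/
def symSet {q : ℝ} (hq : 0 < q) : Submodule ℂ (RatFunc ℂ) where
  carrier := {g | ∃ G ∈ goodA hq, (∀ i, i ≠ 0 → G i = 0) ∧ G 0 = g + invK g}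
  zero_mem' := ⟨0, zero_mem _, by simp, by simp⟩
  add_mem' := by
    rintro a b ⟨G, hG, h1, h2⟩ ⟨G', hG', h1', h2'⟩
    refine ⟨G + G', add_mem hG hG', fun i hi => by simp [h1 i hi, h1' i hi], ?_⟩
    rw [Finsupp.add_apply, h2, h2', map_add]; ring
  smul_mem' := by
    rintro c a ⟨G, hG, h1, h2⟩
    refine ⟨c • G, Submodule.smul_mem _ c hG, fun i hi => by simp [h1 i hi], ?_⟩
    rw [Finsupp.smul_apply, h2, RatFunc.smul_eq_C_mul, RatFunc.smul_eq_C_mul, map_mul, invK_C]; ring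

theorem one_mem_goodA {q : ℝ} (hq : 0 < q) : Finsupp.single 0 1 ∈ goodA hq :=
  ⟨Good.one q, by rw [wform_one]; exact one_mem _⟩

theorem eMul_mem {q : ℝ} (hq : 0 < q) (hq1 : q < 1) (a : ℤ) {F : ℤ →₀ RatFunc ℂ}
    (hF : F ∈ goodA hq) : eMul q a F ∈ goodA hq := by
  refine ⟨hF.1.eMul hq hq1 a, ?_⟩
  have hq0 := zpow_ne_zero (-a) (qc_ne hq)
  have hg : mulOp q (RatFunc.X ^ a) * uPlus hq + mulOp q (RatFunc.X ^ (-a)) * uMinus hq ∈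
    Acal hq := Algebra.subset_adjoin (Or.inr ⟨a, rfl⟩)
  rw [gen_eq] at hg
  have h2 := Subalgebra.smul_mem _ hg ((q : ℂ) ^ (-a))⁻¹
  rw [smul_smul, inv_mul_cancel₀ hq0, one_smul] at h2
  rw [← eMul_wform hq a hF.1]
  exact mul_mem h2 hF.2

theorem symMul_mem {q : ℝ} (hq : 0 < q) (a : ℤ) {F : ℤ →₀ RatFunc ℂ}
    (hF : F ∈ goodA hq) : shiftF 0 (symF q a) F ∈ goodA hq := by
  refine ⟨hF.1.symMul hq a, ?_⟩
  rw [← symMul_wform hq a hF.1]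
  exact mul_mem (Algebra.subset_adjoin (Or.inl ⟨a, rfl⟩)) hF.2

theorem zpow_mem_symSet {q : ℝ} (hq : 0 < q) (a : ℤ) : RatFunc.X ^ a ∈ symSet hq := by
  refine ⟨_, symMul_mem hq a (one_mem_goodA hq), fun i hi => ?_, ?_⟩
  · rw [shiftF_apply, sub_zero, Finsupp.single_eq_of_ne hi, mul_zero]
  · rw [shiftF_apply, sub_zero, Finsupp.single_eq_same, mul_one, symF, map_zpow₀ invK, invK_X,
      inv_zpow']
    simp

theorem Phi_eq {c : ℂ} (hc : c ≠ 0) (a : ℤ) : Phi c⁻¹ a =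
    RatFunc.C (c * c ^ (-a)) * (RatFunc.X ^ (a + 1) * (RatFunc.X ^ 2 - RatFunc.C (c ^ 2))⁻¹) := by
  have hX := RatFunc.X_ne_zero (K := ℂ)
  have hC : (RatFunc.C c : RatFunc ℂ) ≠ 0 := by simpa using hc
  have e3 : (RatFunc.C c⁻¹ * RatFunc.X - (RatFunc.C c⁻¹ * RatFunc.X)⁻¹ : RatFunc ℂ) =
      (RatFunc.C c)⁻¹ * RatFunc.X⁻¹ * (RatFunc.X ^ 2 - RatFunc.C (c ^ 2)) := by
    rw [map_inv₀, map_pow]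
    field_simp
  rw [Phi, e3, mul_inv, mul_inv, inv_inv, inv_inv, mul_zpow, map_mul, map_zpow₀, map_inv₀,
    inv_zpow', zpow_add_one₀ hX]
  ring

/-- The denominators of the top coefficients. -/
def Dn (q : ℝ) (n : ℕ) : RatFunc ℂ :=
  ∏ j ∈ Finset.range n, (RatFunc.X ^ 2 - RatFunc.C (((q : ℂ) ^ j) ^ 2))

theorem sq_sub_ne (c : ℂ) : (RatFunc.X ^ 2 - RatFunc.C (c ^ 2) : RatFunc ℂ) ≠ 0 := by
  have h1 := X_sub_C_rf_ne_zero c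
  have h2 := X_sub_C_rf_ne_zero (-c)
  have : (RatFunc.X ^ 2 - RatFunc.C (c ^ 2) : RatFunc ℂ) =
      (RatFunc.X - RatFunc.C c) * (RatFunc.X - RatFunc.C (-c)) := by
    rw [map_pow, map_neg]; ring
  rw [this]
  exact mul_ne_zero h1 h2

theorem Dn_ne (q : ℝ) (n : ℕ) : Dn q n ≠ 0 :=
  Finset.prod_ne_zero_iff.2 fun _ _ => sq_sub_ne _

theorem topSet_step {q : ℝ} (hq : 0 < q) (hq1 : q < 1) (n : ℕ) (a : ℤ) {g : RatFunc ℂ}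
    (hg : g ∈ topSet hq n) :
    RatFunc.X ^ (a + 1) * (RatFunc.X ^ 2 - RatFunc.C (((q : ℂ) ^ n) ^ 2))⁻¹ * g ∈
      topSet hq ((n + 1 : ℕ) : ℤ) := by
  obtain ⟨G, hG, h1, rfl⟩ := hg
  have hc : (q : ℂ) ^ n ≠ 0 := pow_ne_zero _ (qc_ne hq)
  have hs : (q : ℂ) ^ n * ((q : ℂ) ^ n) ^ (-a) ≠ 0 := mul_ne_zero hc (zpow_ne_zero _ hc)
  have h2 : eMul q a G ((n + 1 : ℕ) : ℤ) ∈ topSet hq ((n + 1 : ℕ) : ℤ) := by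
    refine ⟨_, eMul_mem hq hq1 a hG, fun i hi => ?_, rfl⟩
    push_cast at hi
    rw [eMul_apply, h1 _ (by omega), h1 _ (by omega)]; simp
  have h3 : eMul q a G ((n + 1 : ℕ) : ℤ) = ((q : ℂ) ^ n * ((q : ℂ) ^ n) ^ (-a)) •
      (RatFunc.X ^ (a + 1) * (RatFunc.X ^ 2 - RatFunc.C (((q : ℂ) ^ n) ^ 2))⁻¹ * G n) := by
    have e : (((n + 1 : ℕ) : ℤ) - 1) = n := by push_cast; ring
    rw [eMul_apply, h1 (_ + 1) (by push_cast; omega), e, zpow_neg, zpow_natCast, Phi_eq hc,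
      RatFunc.smul_eq_C_mul]
    ring
  rw [h3] at h2
  have h4 := Submodule.smul_mem _ ((q : ℂ) ^ n * ((q : ℂ) ^ n) ^ (-a))⁻¹ h2
  rwa [smul_smul, inv_mul_cancel₀ hs, one_smul] at h4

theorem mem_topSet {q : ℝ} (hq : 0 < q) (hq1 : q < 1) (n : ℕ) :
    ∀ a : ℤ, RatFunc.X ^ a * (Dn q (n + 1))⁻¹ ∈ topSet hq ((n + 1 : ℕ) : ℤ) := by
  have hX := RatFunc.X_ne_zero (K := ℂ)
  induction n with
  | zero =>
    intro a
    have h1 : (1 : RatFunc ℂ) ∈ topSet hq ((0 : ℕ) : ℤ) :=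
      ⟨_, one_mem_goodA hq, fun i hi => Finsupp.single_eq_of_ne (by push_cast at hi; omega),
        by simp⟩
    have h2 := topSet_step hq hq1 0 (a - 1) h1
    rw [sub_add_cancel, mul_one] at h2
    simpa [Dn] using h2
  | succ n ih =>
    intro a
    have h2 := topSet_step hq hq1 (n + 1) 0 (ih (a - 1))
    have e : (RatFunc.X ^ (0 + 1 : ℤ) *
        (RatFunc.X ^ 2 - RatFunc.C (((q : ℂ) ^ (n + 1)) ^ 2))⁻¹ *
        (RatFunc.X ^ (a - 1) * (Dn q (n + 1))⁻¹) : RatFunc ℂ) =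
        RatFunc.X ^ a * (Dn q (n + 1 + 1))⁻¹ := by
      rw [Dn, Dn, Finset.prod_range_succ _ (n + 1), mul_inv, zero_add, zpow_one, zpow_sub_one₀ hX]
      field_simp
    rwa [e] at h2

theorem Good.eq_zero_of_lt {q : ℝ} {F : ℤ →₀ RatFunc ℂ} (hF : Good q F) {n : ℤ}
    (h : ∀ i, n < i → F i = 0) {i : ℤ} (hi : i < -n) : F i = 0 := by
  have h1 := hF.sym i
  rw [h (-i) (by omega), map_zero] at h1
  have h2 : (RatFunc.C ((-1 : ℂ) ^ i) : RatFunc ℂ) ≠ 0 := by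
    rw [Ne, map_eq_zero]; exact zpow_ne_zero _ (by norm_num)
  exact (mul_eq_zero.1 h1.symm).resolve_left h2

theorem Good.hasRes {q : ℝ} {F : ℤ →₀ RatFunc ℂ} (hF : Good q F) (n j : ℤ) {ε : ℂ}
    (hε : ε ^ 2 = 1) : ∃ r, HasRes (F n) (ε * (q : ℂ) ^ j) r := by
  obtain ⟨r, _, h⟩ := hF.res j (n - j) ε hε
  exact ⟨_, h.congr (by congr 1; ring) rfl⟩

theorem dom_or {q : ℝ} {z : ℂ} (hz : z ≠ 0) : (∃ y : Dom q, y.1 = z) ∨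
    ∃ (j : ℤ) (ε : ℂ), ε ^ 2 = 1 ∧ z = ε * (q : ℂ) ^ j := by
  by_cases h : ∃ j : ℤ, z = (q : ℂ) ^ j ∨ z = -(q : ℂ) ^ j
  · right
    obtain ⟨j, h | h⟩ := h
    · exact ⟨j, 1, by norm_num, by rw [h, one_mul]⟩
    · exact ⟨j, -1, by norm_num, by rw [h]; ring⟩
  · left
    push Not at h
    exact ⟨⟨z, hz, h⟩, rfl⟩

theorem Good.reg_top {q : ℝ} {F : ℤ →₀ RatFunc ℂ} (hF : Good q F) {n : ℕ}
    (h : ∀ i, (n : ℤ) < i → F i = 0) {z : ℂ} (hz : z ≠ 0)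
    (hz' : ∀ j < n, z ^ 2 ≠ ((q : ℂ) ^ j) ^ 2) : Reg (F n) z := by
  rcases dom_or (q := q) hz with ⟨y, rfl⟩ | ⟨j, ε, hε, rfl⟩
  · exact hF.reg n y
  by_cases hjn : j = n
  · rw [hjn]; exact hF.reg_self n hε
  have hj : F (2 * j - n) = 0 := by
    rcases lt_or_ge j 0 with hj | hj
    · exact hF.eq_zero_of_lt h (by omega)
    · lift j to ℕ using hj
      apply h
      have : ¬ j < n := fun hlt => hz' j hlt (by rw [mul_pow, hε, one_mul, zpow_natCast])
      omega
  obtain ⟨r, h1, h2⟩ := hF.res j (n - j) ε hε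
  have h1' := h1.congr (g := 0) (by rw [← hj]; congr 1; ring) rfl
  have hr : r = 0 := h1'.unique (HasVal.zero _).hasRes
  rw [hr, mul_zero] at h2
  exact (h2.congr (g := F n) (by congr 1; ring) rfl).reg

theorem sq_sub_reg (c z : ℂ) : Reg (RatFunc.X ^ 2 - RatFunc.C c) z :=
  ⟨_, ((HasVal.X z).pow 2).sub (HasVal.C c z)⟩

theorem Reg.mul {f g : RatFunc ℂ} {z : ℂ} (hf : Reg f z) (hg : Reg g z) : Reg (f * g) z := by
  obtain ⟨a, ha⟩ := hf
  obtain ⟨b, hb⟩ := hg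
  exact ⟨_, ha.mul hb⟩

theorem prod_reg (q : ℝ) (s : Finset ℕ) (z : ℂ) :
    Reg (∏ j ∈ s, (RatFunc.X ^ 2 - RatFunc.C (((q : ℂ) ^ j) ^ 2))) z := by
  classical
  induction s using Finset.induction_on with
  | empty => exact ⟨_, HasVal.one z⟩
  | insert a s ha ih => rw [Finset.prod_insert ha]; exact (sq_sub_reg _ _).mul ih

theorem Good.top_laurent {q : ℝ} (hq : 0 < q) {F : ℤ →₀ RatFunc ℂ} (hF : Good q F) {n : ℕ}
    (h : ∀ i, (n : ℤ) < i → F i = 0) : ∃ (p : ℂ[X]) (N : ℕ),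
    F n = algebraMap ℂ[X] (RatFunc ℂ) p * (RatFunc.X ^ N)⁻¹ * (Dn q n)⁻¹ := by
  have key : ∀ z, z ≠ 0 → Reg (F n * Dn q n) z := by
    intro z hz
    by_cases hz' : ∀ j < n, z ^ 2 ≠ ((q : ℂ) ^ j) ^ 2
    · exact (hF.reg_top h hz hz').mul (prod_reg q _ z)
    · push Not at hz'
      obtain ⟨j, hj, hzj⟩ := hz'
      have hc : (q : ℂ) ^ j ≠ 0 := pow_ne_zero _ (qc_ne hq)
      have hε : (z / (q : ℂ) ^ j) ^ 2 = 1 := by rw [div_pow, hzj]; field_simp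
      obtain ⟨r, hr⟩ := hF.hasRes n j hε
      rw [zpow_natCast, div_mul_cancel₀ _ hc] at hr
      have h1 : Reg ((RatFunc.X - RatFunc.C z) * F n) z := ⟨r, hr⟩
      have h2 : Reg (RatFunc.X + RatFunc.C z) z := ⟨_, (HasVal.X z).add (HasVal.C z z)⟩
      have h3 := (h1.mul h2).mul (prod_reg q ((Finset.range n).erase j) z)
      have e : Dn q n = (RatFunc.X ^ 2 - RatFunc.C (z ^ 2)) *
          ∏ j ∈ (Finset.range n).erase j, (RatFunc.X ^ 2 - RatFunc.C (((q : ℂ) ^ j) ^ 2)) := by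
        rw [Dn, ← Finset.mul_prod_erase _ _ (Finset.mem_range.2 hj), hzj]
      rw [e, map_pow]
      convert h3 using 1
      ring
  obtain ⟨p, N, hp⟩ := laurent_of_reg key
  refine ⟨p, N, ?_⟩
  rw [← hp, mul_assoc, mul_inv_cancel₀ (Dn_ne q n), mul_one]

theorem laurent_mem {V : Submodule ℂ (RatFunc ℂ)} {D : RatFunc ℂ}
    (h : ∀ a : ℤ, RatFunc.X ^ a * D ∈ V) (p : ℂ[X]) (N : ℕ) :
    algebraMap ℂ[X] (RatFunc ℂ) p * (RatFunc.X ^ N)⁻¹ * D ∈ V := by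
  have hX := RatFunc.X_ne_zero (K := ℂ)
  induction p using Polynomial.induction_on' with
  | add p r hp hr => rw [map_add, add_mul, add_mul]; exact add_mem hp hr
  | monomial m a =>
    have := Submodule.smul_mem V a (h (m - N))
    convert this using 1
    rw [RatFunc.smul_eq_C_mul, ← Polynomial.C_mul_X_pow_eq_monomial, map_mul, map_pow,
      RatFunc.algebraMap_X, RatFunc.algebraMap_C, zpow_sub₀ hX, zpow_natCast, zpow_natCast]
    ring

theorem Good.mem {q : ℝ} (hq : 0 < q) (hq1 : q < 1) (n : ℕ) : ∀ {F : ℤ →₀ RatFunc ℂ},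
    Good q F → (∀ i, (n : ℤ) < i → F i = 0) → F ∈ goodA hq := by
  induction n with
  | zero =>
    intro F hF h
    obtain ⟨p, N, hp⟩ := hF.top_laurent hq h
    have h1 : F 0 ∈ symSet hq := by
      have e : F 0 = algebraMap ℂ[X] (RatFunc ℂ) p * (RatFunc.X ^ N)⁻¹ * 1 := by
        rw [Nat.cast_zero] at hp
        rw [hp, Dn]; simp
      rw [e]
      exact laurent_mem (fun a => by rw [mul_one]; exact zpow_mem_symSet hq a) p N
    obtain ⟨G, hG, h2, h3⟩ := h1
    have hs := hF.sym 0
    rw [neg_zero, zpow_zero, map_one, one_mul] at hs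
    have e : F = (2⁻¹ : ℂ) • G := by
      ext1 i
      rw [Finsupp.smul_apply]
      by_cases hi : i = 0
      · rw [hi, h3, hs, ← two_smul ℂ (F 0), smul_smul]; norm_num
      · rw [h2 i hi, smul_zero]
        rcases lt_or_gt_of_ne hi with hi | hi
        · exact hF.eq_zero_of_lt h (by simpa using hi)
        · exact h i (by simpa using hi)
    rw [e]
    exact Submodule.smul_mem _ _ hG
  | succ n ih =>
    intro F hF h
    obtain ⟨p, N, hp⟩ := hF.top_laurent hq h
    have h1 : F ((n + 1 : ℕ) : ℤ) ∈ topSet hq ((n + 1 : ℕ) : ℤ) := by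
      rw [hp]; exact laurent_mem (mem_topSet hq hq1 n) p N
    obtain ⟨G, hG, h2, h3⟩ := h1
    have h4 : F + (-1 : ℂ) • G ∈ goodA hq := by
      apply ih (hF.add (hG.1.smul _))
      intro i hi
      rw [Finsupp.add_apply, Finsupp.smul_apply]
      by_cases hi' : i = ((n + 1 : ℕ) : ℤ)
      · rw [hi', h3]; simp
      · have hi2 : ((n + 1 : ℕ) : ℤ) < i := by push_cast at hi' ⊢; omega
        rw [h i hi2, h2 i hi2]; simp
    have h5 := add_mem h4 hG
    simpa using h5

theorem goodOps_le {q : ℝ} (hq : 0 < q) (hq1 : q < 1) {F : ℤ →₀ RatFunc ℂ} (hF : Good q F) :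
    wform hq F ∈ Acal hq := by
  refine (hF.mem hq hq1 (F.support.sup Int.natAbs) fun i hi => ?_).2
  by_contra h
  have : i.natAbs ≤ F.support.sup Int.natAbs :=
    Finset.le_sup (f := Int.natAbs) (Finsupp.mem_support_iff.2 h)
  omega

/-! ### Translation of the conditions -/

theorem Good.okPoles {q : ℝ} {F : ℤ →₀ RatFunc ℂ} (hF : Good q F) (i : ℤ) :
    OkPoles q (F i) := by
  intro z hz hd
  rcases dom_or (q := q) hz with ⟨y, rfl⟩ | ⟨j, ε, hε, rfl⟩
  · exact absurd hd (hF.reg i y).denom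
  · obtain ⟨r, hr⟩ := hF.hasRes i j hε
    refine ⟨hr.stuff.1 hd, j, ?_⟩
    rcases eps_cases hε with rfl | rfl
    · left; ring
    · right; ring

theorem Good.residue {q : ℝ} {F : ℤ →₀ RatFunc ℂ} (hF : Good q F) (i k : ℤ) {ε : ℂ}
    (hε : ε ^ 2 = 1) : residueAt (F (i + k)) (ε * (q : ℂ) ^ i) =
      -(-1) ^ k * residueAt (F (i - k)) (ε * (q : ℂ) ^ i) := by
  obtain ⟨r, h1, h2⟩ := hF.res i k ε hε
  rw [h1.stuff.2, h2.stuff.2]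

theorem good_of {q : ℝ} (hq : 0 < q) {F : ℤ →₀ RatFunc ℂ} (h1 : ∀ i : ℤ, OkPoles q (F i))
    (h2 : ∀ (i : ℤ) (z : ℂ), z ≠ 0 →
      (F (-i)).denom.eval z⁻¹ ≠ 0 → (F i).denom.eval z ≠ 0 →
      (F (-i)).eval (RingHom.id ℂ) z⁻¹ = (-1 : ℂ) ^ i * (F i).eval (RingHom.id ℂ) z)
    (h3 : ∀ (i : ℤ) (ε : ℂ), ε ^ 2 = 1 → residueAt (F i) (ε * (q : ℂ) ^ i) = 0)
    (h4 : ∀ (i : ℤ) (k : ℕ) (ε : ℂ), ε ^ 2 = 1 → 0 < k →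
      residueAt (F (i + k)) (ε * (q : ℂ) ^ i) =
        (-1 : ℂ) ^ (k + 1) * residueAt (F (i - k)) (ε * (q : ℂ) ^ i)) : Good q F where
  reg i z := by
    refine ⟨_, hasVal_of_denom fun h => ?_⟩
    obtain ⟨_, j, hj | hj⟩ := h1 i z.1 z.2.1 h
    · exact (z.2.2 j).1 hj
    · exact (z.2.2 j).2 hj
  sym i := by
    have f1 : {z : ℂ | (F i).denom.eval z = 0}.Finite :=
      Polynomial.finite_setOf_isRoot (RatFunc.denom_ne_zero (F i))
    have f2 : {z : ℂ | (F (-i)).denom.eval z⁻¹ = 0}.Finite :=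
      (Polynomial.finite_setOf_isRoot (RatFunc.denom_ne_zero (F (-i)))).preimage
        inv_injective.injOn
    refine eq_of_values _ ((f1.union f2).union (Set.finite_singleton 0)).infinite_compl ?_
    intro z hz
    have a1 : (F i).denom.eval z ≠ 0 := fun h => hz (Or.inl (Or.inl h))
    have a2 : (F (-i)).denom.eval z⁻¹ ≠ 0 := fun h => hz (Or.inl (Or.inr h))
    have a3 : z ≠ 0 := fun h => hz (Or.inr h)
    refine ⟨_, (hasVal_of_denom a2).inversion a3, ?_⟩
    rw [h2 i z a3 a2 a1]
    exact (HasVal.C _ _).mul (hasVal_of_denom a1)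
  res i k ε hε := by
    have hε0 : ε ≠ 0 := by rintro rfl; simp at hε
    have hz : ε * (q : ℂ) ^ i ≠ 0 := mul_ne_zero hε0 (zpow_ne_zero _ (qc_ne hq))
    have hr : ∀ j, HasRes (F j) (ε * (q : ℂ) ^ i) (residueAt (F j) (ε * (q : ℂ) ^ i)) := fun j =>
      hasRes_of_mult fun h => (h1 j _ hz h).1
    refine ⟨_, hr _, (hr _).congr rfl ?_⟩
    obtain ⟨m, rfl | rfl⟩ := k.eq_nat_or_neg
    · rcases Nat.eq_zero_or_pos m with rfl | hm
      · simp [h3 i ε hε]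
      · rw [h4 i m ε hε hm, zpow_natCast, pow_succ]; ring
    · rcases Nat.eq_zero_or_pos m with rfl | hm
      · simp [h3 i ε hε]
      · have hs := neg_one_sq_zpow m
        rw [zpow_natCast] at hs
        have e5 : (-1 : ℂ) ^ (-(m : ℤ)) = (-1) ^ m := by
          rw [← inv_zpow', zpow_natCast]; norm_num
        rw [sub_neg_eq_add, h4 i m ε hε hm, e5, ← sub_eq_add_neg, pow_succ]
        linear_combination (-residueAt (F (i - m)) (ε * (q : ℂ) ^ i)) * hs

/-- `𝒜` coincides with the set of elements `a = Σ_i w^i f_i` of `W` whose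
coefficients have only simple poles, only possibly at `±q^j`, with
(1) `f_{−i}(v⁻¹) = (−1)^i f_i(v)`, (2) `f_i^{(i,±)} = 0`, and
(3) `f_{i+k}^{(i,±)} = (−1)^{k+1} f_{i−k}^{(i,±)}` for every positive integer `k`. -/
theorem statement13 (q : ℝ) (hq : 0 < q) (hq1 : q < 1) :
    (Acal hq : Set (Module.End ℂ (Dom q → ℂ))) =
      {a | ∃ F : ℤ →₀ RatFunc ℂ, a = wform hq F ∧
        (∀ i : ℤ, OkPoles q (F i)) ∧
        (∀ (i : ℤ) (z : ℂ), z ≠ 0 →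
          (F (-i)).denom.eval z⁻¹ ≠ 0 → (F i).denom.eval z ≠ 0 →
          (F (-i)).eval (RingHom.id ℂ) z⁻¹ = (-1 : ℂ) ^ i * (F i).eval (RingHom.id ℂ) z) ∧
        (∀ i : ℤ, residueAt (F i) ((q : ℂ) ^ i) = 0 ∧
          residueAt (F i) (-(q : ℂ) ^ i) = 0) ∧
        (∀ (i : ℤ) (k : ℕ), 0 < k →
          residueAt (F (i + k)) ((q : ℂ) ^ i) =
            (-1 : ℂ) ^ (k + 1) * residueAt (F (i - k)) ((q : ℂ) ^ i) ∧
          residueAt (F (i + k)) (-(q : ℂ) ^ i) =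
            (-1 : ℂ) ^ (k + 1) * residueAt (F (i - k)) (-(q : ℂ) ^ i))} := by

  ext a
  constructor
  · intro ha
    obtain ⟨F, hF, rfl⟩ := Acal_le hq hq1 ha
    have one_sq : (1 : ℂ) ^ 2 = 1 := by norm_num
    have neg_sq : (-1 : ℂ) ^ 2 = 1 := by norm_num
    refine ⟨F, rfl, hF.okPoles, ?_, ?_, ?_⟩
    · intro i z hz h1 h2
      have h3 := (hasVal_of_denom h1).inversion hz
      rw [hF.sym i] at h3
      exact h3.unique ((HasVal.C _ _).mul (hasVal_of_denom h2))
    · intro i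
      have key : ∀ ε : ℂ, ε ^ 2 = 1 → residueAt (F i) (ε * (q : ℂ) ^ i) = 0 := fun ε hε => by
        obtain ⟨c, hc⟩ := hF.reg_self i hε
        exact hc.hasRes.stuff.2
      have k1 := key 1 one_sq
      have k2 := key (-1) neg_sq
      rw [one_mul] at k1
      rw [neg_one_mul] at k2
      exact ⟨k1, k2⟩
    · intro i k _
      have k1 := hF.residue i k one_sq
      have k2 := hF.residue i k neg_sq
      rw [one_mul, zpow_natCast] at k1
      rw [neg_one_mul, zpow_natCast] at k2
      rw [k1, k2, pow_succ]
      constructor <;> ring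
  · rintro ⟨F, rfl, h1, h2, h3, h4⟩
    refine goodOps_le hq hq1 (good_of hq h1 h2 ?_ ?_)
    · intro i ε hε
      rcases eps_cases hε with rfl | rfl
      · rw [one_mul]; exact (h3 i).1
      · rw [neg_one_mul]; exact (h3 i).2
    · intro i k ε hε hk
      rcases eps_cases hε with rfl | rfl
      · rw [one_mul]; exact (h4 i k hk).1
      · rw [neg_one_mul]; exact (h4 i k hk).2
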